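/- Let d ≥ 0 be an integer. If a finite non-null graph G has average degree less than d + 1 + 2/(d+4), then either G contains a vertex of degree at most d, or G contains a vertex of degree d+1 with at most one neighbor of degree greater than d+1. -/

import Mathlib

theorem stmt12 {V : Type*} [Fintype V] [DecidableEq V] [Nonempty V] (d : ℕ)
    (G : SimpleGraph V) [DecidableRel G.Adj]
    (h : 2 * (G.edgeFinset.card : ℝ) < (d + 1 + 2 / (d + 4)) * Fintype.card V) :
    (∃ v, G.degree v ≤ d) ∨
    (∃ v, G.degree v = d + 1 ∧
      ((G.neighborFinset v).filter fun u => d + 1 < G.degree u).card ≤ 1) := by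
  by_contra hcon
  push Not at hcon
  obtain ⟨h1, h2⟩ := hcon
  let S := Finset.univ.filter fun v => ¬ d + 1 < G.degree v
  let B := Finset.univ.filter fun v => d + 1 < G.degree v
  have hdc := Finset.sum_card_bipartiteAbove_eq_sum_card_bipartiteBelow (s := S) (t := B) G.Adj
  have hS : ∀ v ∈ S, G.degree v = d + 1 := by
    intro v hv
    have h3 := h1 v
    have h4 : ¬ d + 1 < G.degree v := by simpa [S] using hv
    omega
  have hB : ∀ v ∈ B, d + 2 ≤ G.degree v := by
    intro v hv
    have h4 : d + 1 < G.degree v := by simpa [B] using hv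
    omega
  have e1 : S.card * 2 ≤ ∑ v ∈ S, (Finset.bipartiteAbove G.Adj B v).card := by
    rw [← smul_eq_mul]
    apply Finset.card_nsmul_le_sum
    intro v hv
    have h3 := h2 v (hS v hv)
    have : Finset.bipartiteAbove G.Adj B v
        = (G.neighborFinset v).filter fun u => d + 1 < G.degree u := by
      ext u
      simp [Finset.bipartiteAbove, B, and_comm]
    rw [this]
    exact h3
  have e2 : ∑ v ∈ B, (Finset.bipartiteBelow G.Adj S v).card ≤ ∑ v ∈ B, G.degree v := by
    apply Finset.sum_le_sum
    intro v _
    rw [← G.card_neighborFinset_eq_degree]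
    apply Finset.card_le_card
    intro u hu
    simp only [Finset.mem_bipartiteBelow] at hu
    simpa using hu.2.symm
  have e3 : B.card * (d + 2) ≤ ∑ v ∈ B, G.degree v := by
    rw [← smul_eq_mul]
    exact Finset.card_nsmul_le_sum _ _ _ hB
  have e4 : ∑ v ∈ S, G.degree v = S.card * (d + 1) := by
    rw [Finset.sum_congr rfl hS]; simp
  have e5 : (∑ v ∈ B, G.degree v) + ∑ v ∈ S, G.degree v = 2 * G.edgeFinset.card := by
    rw [← G.sum_degrees_eq_twice_card_edges]
    exact Finset.sum_filter_add_sum_filter_not _ _ _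
  have e6 : B.card + S.card = Fintype.card V :=
    Finset.card_filter_add_card_filter_not (s := Finset.univ) _
  have e7 : S.card * 2 ≤ ∑ v ∈ B, G.degree v := by omega
  rw [e4] at e5
  generalize (∑ v ∈ B, G.degree v) = D at *
  have key : (d * d + 5 * d + 6) * Fintype.card V ≤ (d + 4) * (2 * G.edgeFinset.card) := by
    rw [← e5, ← e6]
    nlinarith [Nat.mul_le_mul_left (d + 3) e3]
  have key' : ((d : ℝ) * d + 5 * d + 6) * Fintype.card V ≤ (d + 4) * (2 * G.edgeFinset.card) := by
    exact_mod_cast key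
  have hp : (0 : ℝ) < d + 4 := by positivity
  have := mul_lt_mul_of_pos_left h hp
  have e8 : ((d : ℝ) + 4) * ((d + 1 + 2 / (d + 4)) * Fintype.card V)
      = ((d : ℝ) * d + 5 * d + 6) * Fintype.card V := by
    field_simp
    ring
  linarith
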